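/- Let α > 0 and x ≥ 2 be real numbers. Then: (i) unconditionally, if α ≤ 1/log x or α ≥ e^x then ∑_{p ≤ x} cos(α log p)/p ≤ log log x + O(1); (ii) unconditionally, if 1/log x ≤ α ≤ 10 then ∑_{p ≤ x} cos(α log p)/p ≤ log(1/α) + O(1); and (iii) assuming the Riemann Hypothesis for the Riemann zeta function, if 10 ≤ α ≤ e^x then ∑_{p ≤ x} cos(α log p)/p ≤ log log log α + O(1). All implied constants are absolute, and the sums run over primes p ≤ x. -/

import Mathlib

open Real Finset

/-!
Replacing the cutoff `p ≤ x` by the weight `p ^ (-1 / log x)` changes the sum by `O(1)`, because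
`∑ log p / p ^ (1 + δ) ≤ |ζ'/ζ (1 + δ)| = 1 / δ + O(1)`. The Euler product turns the weighted sum
into `log |ζ(1 + 1 / log x + iα)| + O(1)`. The pole at `1` bounds this by `log log x` trivially and
by `log (1 / α)` for bounded `α`.

For `α ≥ 10`, suppose `ζ` has no zeros in `Re s > Θ` with `Θ < 1`. Borel-Carathéodory on a disc
centred at `2 + iα` and reaching to the left of `Re s = 1` gives `ζ'/ζ = O(log α)` there. Hadamard's
three circles theorem interpolates this with `ζ'/ζ = O(1 / η)` on the circle of radius `1 - η`:
when `η = 1 / (2 + log log α)` the interpolation exponent of `log α` is `O(η)`, so `ζ'/ζ = O(1 / η)`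
persists up to the circle of radius `1`. Hence `log |ζ|` varies by `O(1)` between the points
`1 + iα` and `1 + η + iα`, and at the latter it is at most `log (1 / η) + O(1)`.
-/

open Set Metric Filter MeasureTheory Topology

open ArithmeticFunction hiding log

section ComplexAnalysis

variable {f : ℂ → ℂ} {c : ℂ} {R : ℝ}

lemma exists_hasDerivAt_logDeriv_and_eq_mul_exp (hf : DifferentiableOn ℂ f (ball c R))
    (hf₀ : ∀ z ∈ ball c R, f z ≠ 0) :
    ∃ g : ℂ → ℂ, g c = 0 ∧ ∀ z ∈ ball c R,
      HasDerivAt g (logDeriv f z) z ∧ f z = f c * Complex.exp (g z) := by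
  have hlog : DifferentiableOn ℂ (logDeriv f) (ball c R) := (hf.deriv isOpen_ball).div hf hf₀
  obtain ⟨g, hgc, hg⟩ := hlog.isExactOn_ball.with_val_at c 0
  refine ⟨g, hgc, fun z hz => ⟨hg z hz, ?_⟩⟩
  have hderiv : ∀ w ∈ ball c R,
      HasDerivWithinAt (fun w => f w * Complex.exp (-g w)) 0 (ball c R) w := by
    intro w hw
    have hfw := (hf.differentiableAt (isOpen_ball.mem_nhds hw)).hasDerivAt
    refine ((hfw.mul (hg w hw).neg.cexp).congr_deriv ?_).hasDerivWithinAt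
    have hw₀ := hf₀ w hw
    simp only [logDeriv_apply, Pi.neg_apply]
    field_simp
    ring
  have hconst := (convex_ball c R).norm_image_sub_le_of_norm_hasDerivWithin_le (C := 0)
    hderiv (fun _ _ => norm_zero.le) (mem_ball_self (pos_of_mem_ball hz)) hz
  rw [zero_mul, norm_le_zero_iff, sub_eq_zero, hgc, neg_zero, Complex.exp_zero, mul_one] at hconst
  rw [← hconst, mul_assoc, ← Complex.exp_add, neg_add_cancel, Complex.exp_zero, mul_one]

lemma log_norm_mul_exp {a : ℂ} (ha : a ≠ 0) (w : ℂ) :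
    log ‖a * Complex.exp w‖ = log ‖a‖ + w.re := by
  rw [norm_mul, Complex.norm_exp, log_mul (norm_ne_zero_iff.mpr ha) (exp_ne_zero _), log_exp]

lemma log_norm_le_of_norm_logDeriv_le (hf : DifferentiableOn ℂ f (ball c R))
    (hf₀ : ∀ z ∈ ball c R, f z ≠ 0) {s : Set ℂ} (hs : Convex ℝ s) (hsR : s ⊆ ball c R) {C : ℝ}
    (hC : ∀ z ∈ s, ‖logDeriv f z‖ ≤ C) {z w : ℂ} (hz : z ∈ s) (hw : w ∈ s) :
    log ‖f w‖ ≤ log ‖f z‖ + C * ‖w - z‖ := by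
  obtain ⟨g, -, hg⟩ := exists_hasDerivAt_logDeriv_and_eq_mul_exp hf hf₀
  have hfc : f c ≠ 0 := hf₀ c (mem_ball_self (pos_of_mem_ball (hsR hz)))
  have hgs : ‖g w - g z‖ ≤ C * ‖w - z‖ := hs.norm_image_sub_le_of_norm_hasDerivWithin_le
    (fun u hu => (hg u (hsR hu)).1.hasDerivWithinAt) hC hz hw
  have hre : (g w).re - (g z).re ≤ C * ‖w - z‖ := (Complex.re_le_norm (g w - g z)).trans hgs
  rw [(hg z (hsR hz)).2, (hg w (hsR hw)).2, log_norm_mul_exp hfc, log_norm_mul_exp hfc]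
  linarith

lemma norm_le_of_re_le_of_mem_closedBall {M ρ : ℝ} (hM : 0 < M)
    (hf : DifferentiableOn ℂ f (ball c R)) (hre : ∀ z ∈ ball c R, (f z).re ≤ M) (hfc : f c = 0)
    (hρ : ρ < R) {z : ℂ} (hz : z ∈ closedBall c ρ) :
    ‖f z‖ ≤ 2 * M * ρ / (R - ρ) := by
  have hzρ : ‖z - c‖ ≤ ρ := by rwa [← dist_eq_norm]
  have hmaps : MapsTo (fun w => c + w) (ball 0 R) (ball c R) := fun w hw => by
    simpa [dist_eq_norm] using hw
  have hshift := Complex.borelCaratheodory_zero (f := fun w => f (c + w)) (z := z - c) hM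
    (hf.comp (by fun_prop) hmaps) (fun w hw => hre _ (hmaps hw))
    (by linarith [norm_nonneg (z - c)]) (by rw [mem_ball_zero_iff]; linarith) (by simpa using hfc)
  rw [add_sub_cancel] at hshift
  refine hshift.trans ?_
  have : 0 < R - ρ := sub_pos.mpr hρ
  have : 0 ≤ ρ := (norm_nonneg _).trans hzρ
  gcongr

lemma norm_logDeriv_le_of_log_norm_le {M ρ : ℝ} (hM : 0 < M)
    (hf : DifferentiableOn ℂ f (ball c R)) (hf₀ : ∀ z ∈ ball c R, f z ≠ 0)
    (hfM : ∀ z ∈ ball c R, log ‖f z‖ ≤ log ‖f c‖ + M) (hρ : ρ < R)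
    {z : ℂ} (hz : z ∈ closedBall c ρ) :
    ‖logDeriv f z‖ ≤ 8 * R * M / (R - ρ) ^ 2 := by
  obtain ⟨g, hgc, hg⟩ := exists_hasDerivAt_logDeriv_and_eq_mul_exp hf hf₀
  have hR₀ : 0 < R := pos_of_mem_ball (closedBall_subset_ball hρ hz)
  have hfc : f c ≠ 0 := hf₀ c (mem_ball_self hR₀)
  have hre : ∀ w ∈ ball c R, (g w).re ≤ M := fun w hw => by
    have := hfM w hw
    rw [(hg w hw).2, log_norm_mul_exp hfc] at this
    linarith
  have hdiff : DifferentiableOn ℂ g (ball c R) := fun w hw =>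
    (hg w hw).1.differentiableAt.differentiableWithinAt
  set r : ℝ := (R - ρ) / 2 with hr
  have hr₀ : 0 < r := by rw [hr]; linarith
  have hsub : closedBall z r ⊆ closedBall c (R - r) :=
    closedBall_subset_closedBall' (by linarith [mem_closedBall.mp hz])
  have hsub' : closedBall z r ⊆ ball c R := hsub.trans (closedBall_subset_ball (by linarith))
  have hgr : ∀ w ∈ sphere z r, ‖g w‖ ≤ 2 * M * R / r := fun w hw => by
    have hw' := norm_le_of_re_le_of_mem_closedBall hM hdiff hre hgc (by linarith)
      (hsub (sphere_subset_closedBall hw))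
    rw [sub_sub_cancel] at hw'
    refine hw'.trans ?_
    gcongr
    linarith
  have hcauchy := Complex.norm_deriv_le_of_forall_mem_sphere_norm_le hr₀
    ((hdiff.mono hsub').diffContOnCl_ball subset_rfl) hgr
  rw [(hg z (closedBall_subset_ball hρ hz)).1.deriv] at hcauchy
  refine hcauchy.trans_eq ?_
  have : R - ρ ≠ 0 := by linarith
  rw [hr]
  field_simp
  ring

end ComplexAnalysis

section ThreeCircles

variable {E : Type*} [NormedAddCommGroup E] [NormedSpace ℂ E]

lemma norm_le_interp_of_mem_annulus {f : ℂ → E} {c z : ℂ} {a b r₁ r₂ : ℝ} (hr₁ : 0 < r₁)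
    (hr : r₁ < r₂) (hf : DiffContOnCl ℂ f (ball c r₂ \ closedBall c r₁))
    (ha : ∀ w ∈ sphere c r₁, ‖f w‖ ≤ a) (hb : ∀ w ∈ sphere c r₂, ‖f w‖ ≤ b)
    (h₁ : r₁ ≤ dist z c) (h₂ : dist z c ≤ r₂) :
    ‖f z‖ ≤ a ^ (1 - (log (dist z c) - log r₁) / (log r₂ - log r₁)) *
      b ^ ((log (dist z c) - log r₁) / (log r₂ - log r₁)) := by
  have hr₂ : 0 < r₂ := hr₁.trans hr
  have hz₀ : 0 < dist z c := hr₁.trans_le h₁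
  have hzc : z - c ≠ 0 := sub_ne_zero.mpr (dist_pos.mp hz₀)
  have hlog : log r₁ < log r₂ := log_lt_log hr₁ hr
  have hdist (w : ℂ) : dist (c + Complex.exp w) c = exp w.re := by
    rw [dist_eq_norm, add_sub_cancel_left, Complex.norm_exp]
  have hmaps : MapsTo (fun w => c + Complex.exp w)
      (Complex.HadamardThreeLines.verticalStrip (log r₁) (log r₂))
      (ball c r₂ \ closedBall c r₁) := fun w hw =>
    ⟨by rw [mem_ball, hdist]; exact (lt_log_iff_exp_lt hr₂).mp hw.2,
      by rw [mem_closedBall, hdist, not_le]; exact (log_lt_iff_lt_exp hr₁).mp hw.1⟩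
  have hclosure : closure (Complex.HadamardThreeLines.verticalStrip (log r₁) (log r₂)) =
      Complex.HadamardThreeLines.verticalClosedStrip (log r₁) (log r₂) := by
    rw [Complex.HadamardThreeLines.verticalStrip, Complex.HadamardThreeLines.verticalClosedStrip,
      Complex.closure_preimage_re, closure_Ioo hlog.ne]
  have hexp : DiffContOnCl ℂ (fun w => c + Complex.exp w)
      (Complex.HadamardThreeLines.verticalStrip (log r₁) (log r₂)) :=
    Differentiable.diffContOnCl (by fun_prop)
  have hbdd : BddAbove (norm ∘ (f ∘ fun w => c + Complex.exp w) ''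
      Complex.HadamardThreeLines.verticalClosedStrip (log r₁) (log r₂)) := by
    have hcompact : IsCompact (closure (ball c r₂ \ closedBall c r₁)) :=
      (isBounded_ball.subset sdiff_subset).isCompact_closure
    refine (hcompact.image_of_continuousOn hf.continuousOn.norm).bddAbove.mono ?_
    rintro _ ⟨w, hw, rfl⟩
    rw [← hclosure] at hw
    exact ⟨_, hmaps.closure_of_continuousOn hexp.continuousOn hw, rfl⟩
  have hlogz : (Complex.log (z - c)).re = log (dist z c) := by rw [Complex.log_re, dist_eq_norm]
  have key := Complex.HadamardThreeLines.norm_le_interp_of_mem_verticalClosedStrip'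
    (f := f ∘ fun w => c + Complex.exp w) (z := Complex.log (z - c)) (a := a) (b := b) hlog
    ⟨by rw [hlogz]; exact log_le_log hr₁ h₁, by rw [hlogz]; exact log_le_log hz₀ h₂⟩
    (hf.comp hexp hmaps) hbdd
    (fun w hw => ha _ (by rw [mem_sphere, hdist, show w.re = log r₁ from hw, exp_log hr₁]))
    (fun w hw => hb _ (by rw [mem_sphere, hdist, show w.re = log r₂ from hw, exp_log hr₂]))
  simpa only [Function.comp_apply, hlogz, Complex.exp_log hzc, add_sub_cancel] using key

lemma neg_log_one_sub_le_two_mul {η : ℝ} (hη₀ : 0 ≤ η) (hη : η ≤ 1 / 2) :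
    -log (1 - η) ≤ 2 * η := by
  have h : 0 < 1 - η := by linarith
  have hinv : (1 - η)⁻¹ ≤ 1 + 2 * η := by
    rw [inv_le_iff_one_le_mul₀ h]
    nlinarith
  linarith [one_sub_inv_le_log_of_pos h]

lemma norm_le_mul_rpow_of_mem_annulus {f : ℂ → E} {c z : ℂ} {a b η ρ : ℝ} (hη₀ : 0 ≤ η)
    (hη : η ≤ 1 / 2) (hρ : 1 < ρ)
    (hf : DiffContOnCl ℂ f (ball c ρ \ closedBall c (1 - η))) (ha₁ : 1 ≤ a) (hb₁ : 1 ≤ b)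
    (ha : ∀ w ∈ sphere c (1 - η), ‖f w‖ ≤ a) (hb : ∀ w ∈ sphere c ρ, ‖f w‖ ≤ b)
    (h₁ : 1 - η ≤ dist z c) (h₂ : dist z c ≤ 1) :
    ‖f z‖ ≤ a * b ^ (2 * η / log ρ) := by
  have hr : 0 < 1 - η := by linarith
  have hlogρ : 0 < log ρ := log_pos hρ
  have hlogr : log (1 - η) ≤ 0 := log_nonpos hr.le (by linarith)
  have hlogz : log (1 - η) ≤ log (dist z c) := log_le_log hr h₁
  have hlogz₁ : log (dist z c) ≤ 0 := log_nonpos dist_nonneg h₂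
  refine (norm_le_interp_of_mem_annulus hr (by linarith) hf ha hb h₁ (by linarith)).trans ?_
  set θ := (log (dist z c) - log (1 - η)) / (log ρ - log (1 - η))
  have hθ₀ : 0 ≤ θ := div_nonneg (by linarith) (by linarith)
  have hθ : θ ≤ 2 * η / log ρ :=
    div_le_div₀ (by linarith) (by linarith [neg_log_one_sub_le_two_mul hη₀ hη]) hlogρ (by linarith)
  gcongr
  exact rpow_le_self_of_one_le ha₁ (by linarith)

end ThreeCircles

section Zeta

/-- The integral `∫₁^∞ {t} t^(-s-1) dt`, convergent for `0 < s.re`, which carries the analytic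
continuation of `ζ` to the right half-plane. -/
noncomputable def fractIntegral (s : ℂ) : ℂ :=
  ∫ t in Ioi (1 : ℝ), ((Int.fract t : ℝ) : ℂ) * (t : ℂ) ^ (-(s + 1))

lemma norm_fract_mul_cpow_le (s : ℂ) {t : ℝ} (ht : 0 < t) :
    ‖((Int.fract t : ℝ) : ℂ) * (t : ℂ) ^ (-(s + 1))‖ ≤ t ^ (-(s.re + 1)) := by
  rw [norm_mul, Complex.norm_cpow_eq_rpow_re_of_pos ht, Complex.norm_real, norm_of_nonneg
    (Int.fract_nonneg t)]
  simpa using mul_le_of_le_one_left (rpow_nonneg ht.le _) (Int.fract_lt_one t).le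

lemma norm_fractIntegral_le {s : ℂ} (hs : 0 < s.re) : ‖fractIntegral s‖ ≤ s.re⁻¹ := by
  have hs' : -(s.re + 1) < -1 := by linarith
  calc ‖fractIntegral s‖ ≤ ∫ t in Ioi (1 : ℝ), t ^ (-(s.re + 1)) :=
        norm_integral_le_of_norm_le (integrableOn_Ioi_rpow_of_lt hs' one_pos)
          ((ae_restrict_iff' measurableSet_Ioi).mpr (.of_forall fun t ht =>
            norm_fract_mul_cpow_le s (one_pos.trans ht)))
    _ = s.re⁻¹ := by rw [integral_Ioi_rpow_of_lt hs' one_pos]; simp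

lemma integrableOn_fract_mul_cpow {s : ℂ} (hs : 0 < s.re) :
    IntegrableOn (fun t : ℝ => ((Int.fract t : ℝ) : ℂ) * (t : ℂ) ^ (-(s + 1))) (Ioi 1) :=
  Integrable.mono' (integrableOn_Ioi_rpow_of_lt (by linarith : -(s.re + 1) < -1) one_pos)
    (Measurable.aestronglyMeasurable (by fun_prop))
    ((ae_restrict_iff' measurableSet_Ioi).mpr (.of_forall fun t ht =>
      norm_fract_mul_cpow_le s (one_pos.trans ht)))

lemma fractIntegral_eq_mellin (s : ℂ) :
    fractIntegral s =
      mellin ((Ioi (1 : ℝ)).indicator fun t => ((Int.fract t : ℝ) : ℂ)) (-s) := by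
  have hsmul (t : ℝ) : (t : ℂ) ^ (-s - 1) •
      (Ioi (1 : ℝ)).indicator (fun u => ((Int.fract u : ℝ) : ℂ)) t =
      (Ioi (1 : ℝ)).indicator (fun u => ((Int.fract u : ℝ) : ℂ) * (u : ℂ) ^ (-(s + 1))) t := by
    by_cases ht : t ∈ Ioi (1 : ℝ) <;> simp [ht, mul_comm, neg_add_rev, sub_eq_neg_add]
  simp only [mellin, hsmul]
  rw [setIntegral_indicator measurableSet_Ioi,
    inter_eq_self_of_subset_right (Set.Ioi_subset_Ioi zero_le_one), fractIntegral]

lemma differentiableAt_fractIntegral {s : ℂ} (hs : 0 < s.re) :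
    DifferentiableAt ℂ fractIntegral s := by
  set f := (Ioi (1 : ℝ)).indicator fun t => ((Int.fract t : ℝ) : ℂ)
  have hmeas : Measurable f := (by fun_prop : Measurable _).indicator measurableSet_Ioi
  have hbdd (t : ℝ) : ‖f t‖ ≤ 1 := (norm_indicator_le_norm_self _ _).trans (by
    rw [Complex.norm_real, norm_of_nonneg (Int.fract_nonneg t)]; exact (Int.fract_lt_one t).le)
  have hloc : LocallyIntegrableOn f (Ioi 0) :=
    (locallyIntegrable_const (1 : ℝ)).mono hmeas.aestronglyMeasurable
      (.of_forall fun t => by simpa using hbdd t) |>.locallyIntegrableOn _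
  have htop : f =O[atTop] fun t => t ^ (-(0 : ℝ)) :=
    .of_bound 1 (.of_forall fun t => by simpa using hbdd t)
  have hbot : f =O[𝓝[>] 0] fun t => t ^ (-((-s).re - 1)) := by
    refine EventuallyEq.trans_isBigO (f₂ := 0) ?_ (Asymptotics.isBigO_zero _ _)
    filter_upwards [nhdsWithin_le_nhds (Iio_mem_nhds one_pos)] with t ht
    exact indicator_of_notMem (notMem_Ioi.mpr (le_of_lt ht)) _
  rw [funext fractIntegral_eq_mellin]
  exact (mellin_differentiableAt_of_isBigO_rpow hloc htop (by simpa using hs) hbot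
    (sub_one_lt _)).comp s differentiableAt_id.neg

lemma riemannZeta_eq_mul_integral_floor {s : ℂ} (hs : 1 < s.re) :
    riemannZeta s = s * ∫ t in Ioi (1 : ℝ), (⌊t⌋₊ : ℂ) * (t : ℂ) ^ (-(s + 1)) := by
  have hO : (fun n : ℕ => ∑ k ∈ Finset.Icc 1 n, ‖(1 : ℕ → ℂ) k‖) =O[atTop]
      fun n => (n : ℝ) ^ (1 : ℝ) := by
    simpa using Asymptotics.isBigO_refl _ _
  simpa [LSeries_one_eq_riemannZeta hs] using LSeries_eq_mul_integral' 1 zero_le_one hs hO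

lemma integral_floor_mul_cpow {s : ℂ} (hs : 1 < s.re) :
    ∫ t in Ioi (1 : ℝ), (⌊t⌋₊ : ℂ) * (t : ℂ) ^ (-(s + 1)) = (s - 1)⁻¹ - fractIntegral s := by
  have hs' : (-s).re < -1 := by simpa using hs
  have hsplit : EqOn (fun t : ℝ => (⌊t⌋₊ : ℂ) * (t : ℂ) ^ (-(s + 1)))
      (fun t : ℝ => (t : ℂ) ^ (-s) - ((Int.fract t : ℝ) : ℂ) * (t : ℂ) ^ (-(s + 1)))
      (Ioi 1) := fun t ht => by
    have ht₀ : 0 < t := one_pos.trans ht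
    have hfloor : (⌊t⌋₊ : ℂ) = t - (Int.fract t : ℝ) := by
      rw [← Complex.ofReal_sub, Int.self_sub_fract, Complex.ofReal_intCast,
        ← Int.natCast_floor_eq_floor ht₀.le, Int.cast_natCast]
    have hpow : (t : ℂ) ^ (-s) = t * (t : ℂ) ^ (-(s + 1)) := by
      have := Complex.cpow_add 1 (-(s + 1)) (Complex.ofReal_ne_zero.mpr ht₀.ne')
      rwa [Complex.cpow_one, show 1 + -(s + 1) = -s by ring] at this
    simp only [hfloor, hpow, sub_mul]
  rw [setIntegral_congr_fun measurableSet_Ioi hsplit,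
    integral_sub (integrableOn_Ioi_cpow_of_lt hs' one_pos)
      (integrableOn_fract_mul_cpow (one_pos.trans hs)),
    integral_Ioi_cpow_of_lt hs' one_pos, fractIntegral, Complex.ofReal_one, Complex.one_cpow,
    neg_add_eq_sub, ← neg_sub s 1, neg_div_neg_eq, one_div]

lemma riemannZeta₁_eq_sub_mul_fractIntegral {s : ℂ} (hs : 0 < s.re) :
    riemannZeta₁ s = s - s * (s - 1) * fractIntegral s := by
  have hopen : IsOpen {z : ℂ | 0 < z.re} := isOpen_lt continuous_const Complex.continuous_re
  have hleft : AnalyticOnNhd ℂ riemannZeta₁ {z | 0 < z.re} :=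
    differentiable_riemannZeta₁.differentiableOn.analyticOnNhd hopen
  have hright : AnalyticOnNhd ℂ (fun z => z - z * (z - 1) * fractIntegral z) {z | 0 < z.re} :=
    DifferentiableOn.analyticOnNhd (fun z hz => by
      have hI := (differentiableAt_fractIntegral hz).differentiableWithinAt (s := {z | 0 < z.re})
      fun_prop) hopen
  refine hleft.eqOn_of_preconnected_of_eventuallyEq hright
    (convex_halfSpace_re_gt 0).isPreconnected (z₀ := 2) (by simp) ?_ hs
  filter_upwards [(isOpen_lt continuous_const Complex.continuous_re).mem_nhds
    (show (1 : ℝ) < (2 : ℂ).re by simp)] with z (hz : 1 < z.re)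
  have hz₁ : z ≠ 1 := fun h => by simp [h] at hz
  have hz₂ : z - 1 ≠ 0 := sub_ne_zero.mpr hz₁
  have hζ := (riemannZeta_eq_inv_sub_mul hz₁).symm.trans (riemannZeta_eq_mul_integral_floor hz)
  rw [integral_floor_mul_cpow hz, inv_mul_eq_iff_eq_mul₀ hz₂] at hζ
  rw [hζ]
  field_simp

lemma norm_riemannZeta_le {s : ℂ} (hs : 0 < s.re) (hs₁ : s ≠ 1) :
    ‖riemannZeta s‖ ≤ ‖s‖ * (‖s - 1‖⁻¹ + s.re⁻¹) := by
  have hs₂ : s - 1 ≠ 0 := sub_ne_zero.mpr hs₁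
  have hζ : riemannZeta s = s * ((s - 1)⁻¹ - fractIntegral s) := by
    rw [riemannZeta_eq_inv_sub_mul hs₁, riemannZeta₁_eq_sub_mul_fractIntegral hs]
    field_simp
  rw [hζ, norm_mul, ← norm_inv]
  gcongr
  exact (norm_sub_le _ _).trans (by gcongr; exact norm_fractIntegral_le hs)

lemma norm_riemannZeta_le_div {s : ℂ} {T : ℝ} (hs : 1 ≤ s.re) (hs₁ : s ≠ 1) (hT : ‖s - 1‖ ≤ T) :
    ‖riemannZeta s‖ ≤ (1 + T) ^ 2 / ‖s - 1‖ := by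
  have hpos : 0 < ‖s - 1‖ := norm_sub_pos_iff.mpr hs₁
  have hs₂ : ‖s‖ ≤ 1 + ‖s - 1‖ := by simpa using norm_add_le 1 (s - 1)
  calc ‖riemannZeta s‖ ≤ ‖s‖ * (‖s - 1‖⁻¹ + s.re⁻¹) := norm_riemannZeta_le (by linarith) hs₁
    _ ≤ (1 + ‖s - 1‖) * (‖s - 1‖⁻¹ + 1) := by
      gcongr
      exact inv_le_one_of_one_le₀ hs
    _ = (1 + ‖s - 1‖) ^ 2 / ‖s - 1‖ := by field_simp
    _ ≤ (1 + T) ^ 2 / ‖s - 1‖ := by gcongr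

end Zeta

section DirichletSeries

lemma LSeries_ofReal (g : ℕ → ℝ) {σ : ℝ} (hσ : σ ≠ 0) :
    LSeries (fun n => (g n : ℂ)) σ = ((∑' n : ℕ, g n / (n : ℝ) ^ σ : ℝ) : ℂ) := by
  rw [LSeries, Complex.ofReal_tsum]
  refine tsum_congr fun n => ?_
  rcases eq_or_ne n 0 with rfl | hn
  · simp [hσ]
  · rw [LSeries.term_of_ne_zero hn, Complex.ofReal_div, Complex.ofReal_cpow n.cast_nonneg,
      Complex.ofReal_natCast]

lemma summable_div_rpow_of_LSeriesSummable {g : ℕ → ℝ} {σ : ℝ} (hσ : σ ≠ 0)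
    (hg : LSeriesSummable (fun n => (g n : ℂ)) σ) : Summable fun n : ℕ => g n / (n : ℝ) ^ σ := by
  refine .of_norm (hg.norm.congr fun n => ?_)
  rw [LSeries.norm_term_eq, Complex.norm_real, Complex.ofReal_re]
  rcases eq_or_ne n 0 with rfl | hn
  · simp [hσ]
  · rw [if_neg hn, norm_div, norm_of_nonneg (rpow_nonneg n.cast_nonneg σ)]

lemma norm_LSeries_le_norm_LSeries_re {f : ℕ → ℂ} {g : ℕ → ℝ} {s : ℂ} (hs : s.re ≠ 0)
    (hfg : ∀ n, ‖f n‖ ≤ g n) (hg : LSeriesSummable (fun n => (g n : ℂ)) s.re) :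
    ‖LSeries f s‖ ≤ ‖LSeries (fun n => (g n : ℂ)) s.re‖ := by
  rw [LSeries_ofReal g hs, Complex.norm_real]
  refine (tsum_of_norm_bounded (summable_div_rpow_of_LSeriesSummable hs hg).hasSum
    fun n => ?_).trans (le_norm_self _)
  rw [LSeries.norm_term_eq]
  split_ifs with hn
  · simp [hn, hs]
  · gcongr
    exact hfg n

lemma norm_riemannZeta_le_norm_riemannZeta_re {s : ℂ} (hs : 1 < s.re) :
    ‖riemannZeta s‖ ≤ ‖riemannZeta s.re‖ := by
  have hone : (fun n => ((1 : ℕ → ℝ) n : ℂ)) = 1 := by ext; simp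
  rw [← LSeries_one_eq_riemannZeta hs, ← LSeries_one_eq_riemannZeta (s := s.re) hs, ← hone]
  refine norm_LSeries_le_norm_LSeries_re (zero_lt_one.trans hs).ne' (by simp) ?_
  rwa [hone, LSeriesSummable_one_iff]

lemma inv_norm_riemannZeta_re_le {s : ℂ} (hs : 1 < s.re) :
    ‖riemannZeta s.re‖⁻¹ ≤ ‖riemannZeta s‖ := by
  have hone : (fun n => ((1 : ℕ → ℝ) n : ℂ)) = 1 := by ext; simp
  have hmoebius : ‖LSeries (fun n => (moebius n : ℂ)) s‖ ≤ ‖riemannZeta s.re‖ := by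
    rw [← LSeries_one_eq_riemannZeta (s := s.re) hs, ← hone]
    refine norm_LSeries_le_norm_LSeries_re (zero_lt_one.trans hs).ne' (fun n => ?_) ?_
    · rw [Complex.norm_intCast, Pi.one_apply]
      exact_mod_cast abs_moebius_le_one
    · rwa [hone, LSeriesSummable_one_iff]
  have hinv := LSeries_one_mul_Lseries_moebius hs
  rw [LSeries_one_eq_riemannZeta hs] at hinv
  rw [eq_inv_of_mul_eq_one_left hinv, norm_inv]
  gcongr
  exact norm_pos_iff.mpr (right_ne_zero_of_mul_eq_one hinv)

lemma norm_riemannZeta_two_le : ‖riemannZeta 2‖ ≤ 3 := by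
  have h := norm_riemannZeta_le (s := 2) (by simp) (by norm_num)
  norm_num at h
  exact h

lemma LSeries_vonMangoldt_eq_neg_logDeriv_riemannZeta {s : ℂ} (hs : 1 < s.re) :
    LSeries (fun n => (vonMangoldt n : ℂ)) s = -logDeriv riemannZeta s := by
  rw [LSeries_vonMangoldt_eq_deriv_riemannZeta_div hs, logDeriv_apply, neg_div]

lemma norm_logDeriv_riemannZeta_le_re {s : ℂ} (hs : 1 < s.re) :
    ‖logDeriv riemannZeta s‖ ≤ ‖logDeriv riemannZeta s.re‖ := by
  rw [← norm_neg, ← norm_neg (logDeriv _ (s.re : ℂ)),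
    ← LSeries_vonMangoldt_eq_neg_logDeriv_riemannZeta hs,
    ← LSeries_vonMangoldt_eq_neg_logDeriv_riemannZeta (s := s.re) hs]
  exact norm_LSeries_le_norm_LSeries_re (zero_lt_one.trans hs).ne'
    (fun n => by rw [Complex.norm_real, norm_of_nonneg vonMangoldt_nonneg])
    (LSeriesSummable_vonMangoldt hs)

lemma riemannZeta₁_ne_zero_of_one_le_re {s : ℂ} (hs : 1 ≤ s.re) : riemannZeta₁ s ≠ 0 := by
  rcases eq_or_ne s 1 with rfl | hs₁
  · simp
  · have hζ := riemannZeta_ne_zero_of_one_le_re hs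
    rw [riemannZeta_eq_inv_sub_mul hs₁] at hζ
    exact right_ne_zero_of_mul hζ

lemma logDeriv_riemannZeta_eq_neg_inv_add {s : ℂ} (hs : 1 ≤ s.re) (hs₁ : s ≠ 1) :
    logDeriv riemannZeta s = -(s - 1)⁻¹ + logDeriv riemannZeta₁ s := by
  have hs₂ : s - 1 ≠ 0 := sub_ne_zero.mpr hs₁
  have hζ₁ := riemannZeta₁_ne_zero_of_one_le_re hs
  rw [logDeriv_apply, deriv_riemannZeta_eq_neg_inv_sub_sq_mul_add hs₁,
    riemannZeta_eq_inv_sub_mul hs₁, logDeriv_apply]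
  field_simp

lemma exists_norm_logDeriv_riemannZeta_le (b : ℝ) :
    ∃ C : ℝ, 0 ≤ C ∧ ∀ s : ℂ, 1 < s.re → s.re ≤ b →
      ‖logDeriv riemannZeta s‖ ≤ (s.re - 1)⁻¹ + C := by
  have hcont : ContinuousOn (fun σ : ℝ => logDeriv riemannZeta₁ σ) (Set.Icc 1 b) := fun σ hσ =>
    ((differentiable_riemannZeta₁.deriv.continuous.continuousAt.div
      differentiable_riemannZeta₁.continuous.continuousAt
      (riemannZeta₁_ne_zero_of_one_le_re hσ.1)).comp
      Complex.continuous_ofReal.continuousAt).continuousWithinAt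
  obtain ⟨C, hC⟩ := isCompact_Icc.exists_bound_of_continuousOn hcont
  refine ⟨max 0 C, le_max_left _ _, fun s hs hsb => ?_⟩
  have hσ : (s.re : ℂ) ≠ 1 := by exact_mod_cast hs.ne'
  calc ‖logDeriv riemannZeta s‖ ≤ ‖logDeriv riemannZeta s.re‖ :=
        norm_logDeriv_riemannZeta_le_re hs
    _ = ‖-((s.re : ℂ) - 1)⁻¹ + logDeriv riemannZeta₁ s.re‖ := by
        rw [logDeriv_riemannZeta_eq_neg_inv_add (s := s.re) hs.le hσ]
    _ ≤ (s.re - 1)⁻¹ + max 0 C := by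
        refine (norm_add_le _ _).trans (add_le_add (le_of_eq ?_) ?_)
        · rw [norm_neg, norm_inv, ← Complex.ofReal_one, ← Complex.ofReal_sub, Complex.norm_real,
            norm_of_nonneg (by linarith)]
        · exact (hC _ ⟨hs.le, hsb⟩).trans (le_max_right _ _)

end DirichletSeries

section PrimeSums

lemma re_natCast_cpow_neg {n : ℕ} (hn : n ≠ 0) (s : ℂ) :
    ((n : ℂ) ^ (-s)).re = (n : ℝ) ^ (-s.re) * cos (s.im * log n) := by
  rw [Complex.cpow_def_of_ne_zero (Nat.cast_ne_zero.mpr hn), ← Complex.natCast_log,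
    Complex.exp_re, rpow_def_of_pos (by positivity), ← cos_neg (s.im * log n)]
  simp [-Complex.natCast_log, mul_comm]

lemma re_le_re_neg_log_one_sub_add_sq {z : ℂ} (hz : ‖z‖ ≤ 1 / 2) :
    z.re ≤ (-Complex.log (1 - z)).re + ‖z‖ ^ 2 := by
  have hlog := Complex.norm_log_one_add_sub_self_le (z := -z) (by rw [norm_neg]; linarith)
  rw [norm_neg, ← sub_eq_add_neg, sub_neg_eq_add] at hlog
  have hinv : (1 - ‖z‖)⁻¹ ≤ 2 := by
    rw [inv_le_comm₀ (by linarith) two_pos]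
    linarith
  have hre := Complex.re_le_norm (Complex.log (1 - z) + z)
  rw [Complex.add_re] at hre
  rw [Complex.neg_re]
  linarith [mul_le_mul_of_nonneg_left hinv (sq_nonneg ‖z‖)]

lemma re_prime_cpow_neg_le {s : ℂ} (hs : 1 ≤ s.re) (p : Nat.Primes) :
    ((p : ℂ) ^ (-s)).re ≤ (-Complex.log (1 - (p : ℂ) ^ (-s))).re + (p : ℝ) ^ (-2 : ℝ) := by
  have hp : (2 : ℝ) ≤ p := by exact_mod_cast p.2.two_le
  have hnorm : ‖(p : ℂ) ^ (-s)‖ ≤ (p : ℝ)⁻¹ := by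
    rw [Complex.norm_natCast_cpow_of_pos p.2.pos, ← rpow_neg_one]
    exact rpow_le_rpow_of_exponent_le (by linarith) (by simpa using hs)
  have hhalf : ‖(p : ℂ) ^ (-s)‖ ≤ 1 / 2 := hnorm.trans (by rw [← one_div]; gcongr)
  refine (re_le_re_neg_log_one_sub_add_sq hhalf).trans ?_
  rw [rpow_neg (by positivity), rpow_two, ← inv_pow]
  gcongr

lemma summable_primes_cpow_neg {s : ℂ} (hs : 1 < s.re) :
    Summable fun p : Nat.Primes => (p : ℂ) ^ (-s) := by
  refine .of_norm ((Nat.Primes.summable_rpow.mpr (neg_lt_neg hs)).congr fun p => ?_)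
  rw [Complex.norm_natCast_cpow_of_pos p.2.pos, Complex.neg_re]

lemma tsum_primes_re_cpow_neg_le {s : ℂ} (hs : 1 < s.re) :
    ∑' p : Nat.Primes, ((p : ℂ) ^ (-s)).re ≤
      log ‖riemannZeta s‖ + ∑' p : Nat.Primes, (p : ℝ) ^ (-2 : ℝ) := by
  have hlog : Summable fun p : Nat.Primes => -Complex.log (1 - (p : ℂ) ^ (-s)) := by
    simpa [MulChar.one_apply (isUnit_of_subsingleton _)] using
      DirichletCharacter.summable_neg_log_one_sub_mul_prime_cpow (N := 1) 1 hs
  have hre := (Complex.hasSum_re hlog.hasSum).summable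
  have hsq : Summable fun p : Nat.Primes => (p : ℝ) ^ (-2 : ℝ) :=
    Nat.Primes.summable_rpow.mpr (by norm_num)
  rw [← riemannZeta_eulerProduct_exp_log hs, Complex.norm_exp, log_exp, Complex.re_tsum hlog,
    ← hre.tsum_add hsq]
  exact (Complex.hasSum_re (summable_primes_cpow_neg hs).hasSum).summable.tsum_le_tsum
    (re_prime_cpow_neg_le hs.le) (hre.add hsq)

lemma summable_primes_log_mul_rpow_neg {σ : ℝ} (hσ : 1 < σ) :
    Summable fun p : Nat.Primes => log p * (p : ℝ) ^ (-σ) := by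
  have h := summable_div_rpow_of_LSeriesSummable (zero_lt_one.trans hσ).ne'
    (LSeriesSummable_vonMangoldt (s := σ) hσ)
  refine (h.comp_injective Nat.Primes.coe_nat_injective).congr fun p => ?_
  rw [Function.comp_apply, vonMangoldt_apply_prime p.2, rpow_neg (by positivity), div_eq_mul_inv]

lemma tsum_primes_log_mul_rpow_neg_le {σ : ℝ} (hσ : 1 < σ) :
    ∑' p : Nat.Primes, log p * (p : ℝ) ^ (-σ) ≤ ‖logDeriv riemannZeta σ‖ := by
  have hσ₀ : σ ≠ 0 := (zero_lt_one.trans hσ).ne'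
  have hsummable := summable_div_rpow_of_LSeriesSummable hσ₀
    (LSeriesSummable_vonMangoldt (s := σ) hσ)
  calc ∑' p : Nat.Primes, log p * (p : ℝ) ^ (-σ)
      = ∑' p : Nat.Primes, vonMangoldt p / (p : ℝ) ^ σ := tsum_congr fun p => by
        rw [vonMangoldt_apply_prime p.2, rpow_neg (by positivity), div_eq_mul_inv]
    _ ≤ ∑' n : ℕ, vonMangoldt n / (n : ℝ) ^ σ :=
        tsum_comp_le_tsum_of_inj hsummable
          (fun n => div_nonneg vonMangoldt_nonneg (by positivity)) Nat.Primes.coe_nat_injective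
    _ ≤ ‖logDeriv riemannZeta σ‖ := by
        rw [← norm_neg, ← LSeries_vonMangoldt_eq_neg_logDeriv_riemannZeta (s := σ) hσ,
          LSeries_ofReal _ hσ₀, Complex.norm_real]
        exact le_norm_self _

lemma sum_primes_le_tsum {f : ℕ → ℝ} {g : Nat.Primes → ℝ} (N : ℕ) (hg : Summable g)
    (hfg : ∀ p : Nat.Primes, (if (p : ℕ) ≤ N then f p else 0) ≤ g p) :
    ∑ p ∈ Finset.filter Nat.Prime (Finset.Iic N), f p ≤ ∑' p, g p := by
  rw [← Finset.sum_subtype_eq_sum_filter]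
  calc ∑ p ∈ (Finset.Iic N).subtype Nat.Prime, f p
      ≤ ∑ p ∈ (Finset.Iic N).subtype Nat.Prime, g p := Finset.sum_le_sum fun p hp => by
        simpa [Finset.mem_Iic.mp (Finset.mem_subtype.mp hp)] using hfg p
    _ ≤ ∑' p, g p := hg.sum_le_tsum (ι := Nat.Primes) _ fun p hp => by
        have : ¬ (p : ℕ) ≤ N := fun h => hp (Finset.mem_subtype.mpr (Finset.mem_Iic.mpr h))
        simpa [this] using hfg p

-- The factor `e^{-u}` replaces the sharp cutoff `u ≤ 1` at the cost of the summable error `e · u`.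
lemma ite_le_one_le_exp_neg_mul {c u : ℝ} (hc : |c| ≤ 1) (hu : 0 ≤ u) :
    (if u ≤ 1 then c else 0) ≤ exp (-u) * (c + exp 1 * u) := by
  obtain ⟨hc₁, hc₂⟩ := abs_le.mp hc
  split_ifs with h
  · have h₁ : 1 - exp (-u) ≤ u := by linarith [add_one_le_exp (-u)]
    have h₂ : u ≤ exp (-u) * (exp 1 * u) := by
      rw [← mul_assoc, ← exp_add]
      exact le_mul_of_one_le_left hu (one_le_exp (by linarith))
    have h₃ : (1 - exp (-u)) * c ≤ 1 - exp (-u) :=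
      mul_le_of_le_one_right (sub_nonneg.mpr (exp_le_one_iff.mpr (by linarith))) hc₂
    linarith
  · have : 1 ≤ exp 1 * u := one_le_mul_of_one_le_of_one_le (one_le_exp zero_le_one) (not_le.mp h).le
    exact mul_nonneg (exp_pos _).le (by linarith)

/-- The sum of `cos (α log p) / p` over the primes `p ≤ x`. -/
noncomputable def primeCosSum (α x : ℝ) : ℝ :=
  ∑ p ∈ Finset.filter Nat.Prime (Finset.Iic ⌊x⌋₊), cos (α * log p) / p

lemma ite_cos_div_le {x : ℝ} (hx : 1 < x) (α : ℝ) (p : Nat.Primes) :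
    (if (p : ℕ) ≤ ⌊x⌋₊ then cos (α * log p) / p else 0) ≤
      ((p : ℂ) ^ (-((1 + (log x)⁻¹ : ℝ) + α * Complex.I))).re +
        exp 1 * (log x)⁻¹ * (log p * (p : ℝ) ^ (-(1 + (log x)⁻¹))) := by
  have hp : (0 : ℝ) < p := by exact_mod_cast p.2.pos
  have hlogx : 0 < log x := log_pos hx
  have hlogp : 0 ≤ log p := log_natCast_nonneg _
  have hiff : (p : ℕ) ≤ ⌊x⌋₊ ↔ (log x)⁻¹ * log p ≤ 1 := by
    rw [Nat.le_floor_iff (by linarith), inv_mul_le_one₀ hlogx, log_le_log_iff hp (by linarith)]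
  have hrpow : (p : ℝ) ^ (-(1 + (log x)⁻¹)) = (p : ℝ)⁻¹ * exp (-((log x)⁻¹ * log p)) := by
    rw [neg_add, rpow_add hp, rpow_neg_one, rpow_def_of_pos hp]
    ring_nf
  have hcut := ite_le_one_le_exp_neg_mul (abs_cos_le_one (α * log p))
    (mul_nonneg (inv_nonneg.mpr hlogx.le) hlogp)
  calc (if (p : ℕ) ≤ ⌊x⌋₊ then cos (α * log p) / p else 0)
      = (p : ℝ)⁻¹ * if (log x)⁻¹ * log p ≤ 1 then cos (α * log p) else 0 := by
        rw [mul_ite, mul_zero, div_eq_inv_mul, if_congr hiff rfl rfl]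
    _ ≤ (p : ℝ)⁻¹ * (exp (-((log x)⁻¹ * log p)) *
          (cos (α * log p) + exp 1 * ((log x)⁻¹ * log p))) := by gcongr
    _ = _ := by
      rw [re_natCast_cpow_neg p.2.ne_zero]
      simp only [Complex.add_re, Complex.ofReal_re, Complex.re_ofReal_mul, Complex.I_re, mul_zero,
        add_zero, Complex.add_im, Complex.ofReal_im, Complex.im_ofReal_mul, Complex.I_im, mul_one,
        zero_add, hrpow]
      ring

lemma inv_log_le_two {x : ℝ} (hx : 2 ≤ x) : (log x)⁻¹ ≤ 2 := by
  rw [inv_le_comm₀ (log_pos (by linarith)) two_pos]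
  linarith [log_two_gt_d9, log_le_log two_pos hx]

lemma exists_primeCosSum_le_log_norm_riemannZeta :
    ∃ C : ℝ, ∀ α x : ℝ, 2 ≤ x →
      primeCosSum α x ≤ log ‖riemannZeta ((1 + (log x)⁻¹ : ℝ) + α * Complex.I)‖ + C := by
  obtain ⟨C, hC₀, hC⟩ := exists_norm_logDeriv_riemannZeta_le 3
  refine ⟨∑' p : Nat.Primes, (p : ℝ) ^ (-2 : ℝ) + exp 1 * (1 + 2 * C), fun α x hx => ?_⟩
  set δ := (log x)⁻¹
  have hlogx : 0 < log x := log_pos (by linarith)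
  have hδ₀ : 0 < δ := inv_pos.mpr hlogx
  have hδ₂ : δ ≤ 2 := inv_log_le_two hx
  set s : ℂ := (1 + δ : ℝ) + α * Complex.I with hs
  have hs₁ : 1 < s.re := by simpa [hs] using hδ₀
  have hσ : 1 < 1 + δ := by linarith
  have hre := (Complex.hasSum_re (summable_primes_cpow_neg hs₁).hasSum).summable
  have hlog := (summable_primes_log_mul_rpow_neg hσ).mul_left (exp 1 * δ)
  have herr : δ * ∑' p : Nat.Primes, log p * (p : ℝ) ^ (-(1 + δ)) ≤ 1 + 2 * C := by
    have hlogDeriv := hC ((1 + δ : ℝ) : ℂ) hσ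
      (by rw [Complex.ofReal_re]; linarith)
    rw [Complex.ofReal_re, add_sub_cancel_left] at hlogDeriv
    calc _ ≤ δ * (δ⁻¹ + C) := by
          gcongr
          exact (tsum_primes_log_mul_rpow_neg_le hσ).trans hlogDeriv
      _ = 1 + δ * C := by rw [mul_add, mul_inv_cancel₀ hδ₀.ne']
      _ ≤ 1 + 2 * C := by gcongr
  have hsum := sum_primes_le_tsum (f := fun p => cos (α * log p) / p) ⌊x⌋₊ (hre.add hlog)
    (ite_cos_div_le (by linarith) α)
  rw [hre.tsum_add hlog, tsum_mul_left, mul_assoc (exp 1)] at hsum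
  unfold primeCosSum
  linarith [tsum_primes_re_cpow_neg_le hs₁, mul_le_mul_of_nonneg_left herr (exp_pos 1).le]

end PrimeSums

section TrivialBounds

variable {δ : ℝ}

lemma log_norm_riemannZeta_one_add_le (hδ₀ : 0 < δ) {t B : ℝ}
    (hB : ‖riemannZeta ((1 + δ : ℝ) + t * Complex.I)‖ ≤ B) :
    log ‖riemannZeta ((1 + δ : ℝ) + t * Complex.I)‖ ≤ log B :=
  log_le_log (norm_pos_iff.mpr (riemannZeta_ne_zero_of_one_le_re (by simpa using hδ₀.le))) hB

lemma log_norm_riemannZeta_one_add_le_sub_log (hδ₀ : 0 < δ) (hδ : δ ≤ 2) (t : ℝ) :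
    log ‖riemannZeta ((1 + δ : ℝ) + t * Complex.I)‖ ≤ log 9 - log δ := by
  have hre := norm_riemannZeta_le_norm_riemannZeta_re (s := (1 + δ : ℝ) + t * Complex.I)
    (by simpa using hδ₀)
  rw [Complex.add_re, Complex.ofReal_re, Complex.re_ofReal_mul, Complex.I_re, mul_zero,
    add_zero] at hre
  have hnorm : ‖((1 + δ : ℝ) : ℂ) - 1‖ = δ := by
    rw [Complex.ofReal_add, Complex.ofReal_one, add_sub_cancel_left,
      Complex.norm_of_nonneg hδ₀.le]
  have hpole := norm_riemannZeta_le_div (s := (1 + δ : ℝ)) (T := 2) (by simpa using hδ₀.le)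
    (norm_sub_pos_iff.mp (by rwa [hnorm])) (by rwa [hnorm])
  rw [hnorm] at hpole
  rw [← log_div (by norm_num) hδ₀.ne']
  exact log_norm_riemannZeta_one_add_le hδ₀ ((hre.trans hpole).trans_eq (by norm_num))

lemma log_norm_riemannZeta_one_add_le_sub_log_im (hδ₀ : 0 < δ) (hδ : δ ≤ 2) {t : ℝ} (ht₀ : 0 < t)
    (ht : t ≤ 10) : log ‖riemannZeta ((1 + δ : ℝ) + t * Complex.I)‖ ≤ log 169 - log t := by
  set s : ℂ := (1 + δ : ℝ) + t * Complex.I with hs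
  have hsub : s - 1 = δ + t * Complex.I := by
    rw [hs, Complex.ofReal_add, Complex.ofReal_one]
    ring
  have hlower : t ≤ ‖s - 1‖ := by
    have h := (le_abs_self _).trans (Complex.abs_im_le_norm (s - 1))
    simpa [hsub] using h
  have hupper : ‖s - 1‖ ≤ 12 := by
    have h := Complex.norm_le_abs_re_add_abs_im (s - 1)
    have hre : (s - 1).re = δ := by simp [hsub]
    have him : (s - 1).im = t := by simp [hsub]
    rw [hre, him, abs_of_pos hδ₀, abs_of_pos ht₀] at h
    linarith
  rw [← log_div (by norm_num) ht₀.ne']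
  refine log_norm_riemannZeta_one_add_le hδ₀ ?_
  calc ‖riemannZeta s‖ ≤ (1 + 12) ^ 2 / ‖s - 1‖ :=
        norm_riemannZeta_le_div (by simpa [hs] using hδ₀.le)
          (norm_sub_pos_iff.mp (ht₀.trans_le hlower)) hupper
    _ ≤ (1 + 12) ^ 2 / t := by gcongr
    _ = 169 / t := by norm_num

end TrivialBounds

section ZeroFreeHalfPlane

/-- `ζ` has no zeros in the half-plane `Re s > Θ`. For `Θ = 1 / 2` this is the Riemann Hypothesis;
every `Θ < 1` already yields the bound `log log log α + O(1)`. -/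
def ZetaZeroFreeRight (Θ : ℝ) : Prop :=
  ∀ s : ℂ, Θ < s.re → riemannZeta s ≠ 0

lemma zetaZeroFreeRight_half_of_riemannHypothesis (h : RiemannHypothesis) :
    ZetaZeroFreeRight (1 / 2) := by
  intro s hs hζ
  refine hs.ne' (h s hζ ?_ fun hs₁ => riemannZeta_ne_zero_of_one_le_re (by simp [hs₁]) hζ)
  rintro ⟨n, rfl⟩
  have hre : (-2 * ((n : ℂ) + 1)).re = -2 * (n + 1) := by simp
  rw [hre] at hs
  linarith [n.cast_nonneg (α := ℝ)]

lemma norm_riemannZeta_le_six_mul {t : ℝ} {z : ℂ} (ht : 10 ≤ t)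
    (hz : z ∈ ball (2 + t * Complex.I) (3 / 2)) : ‖riemannZeta z‖ ≤ 6 * t := by
  rw [mem_ball, dist_eq_norm] at hz
  have hre : |z.re - 2| < 3 / 2 := by
    simpa using (Complex.abs_re_le_norm _).trans_lt hz
  have him : |z.im - t| < 3 / 2 := by
    simpa using (Complex.abs_im_le_norm _).trans_lt hz
  rw [abs_lt] at hre him
  have hz₁ : 1 ≤ ‖z - 1‖ := by
    have h := (le_abs_self _).trans (Complex.abs_im_le_norm (z - 1))
    simp only [Complex.sub_im, Complex.one_im] at h
    linarith
  have hnorm : ‖z‖ ≤ 2 * t := by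
    have h := Complex.norm_le_abs_re_add_abs_im z
    rw [abs_of_pos (by linarith), abs_of_pos (by linarith)] at h
    linarith
  calc ‖riemannZeta z‖ ≤ ‖z‖ * (‖z - 1‖⁻¹ + z.re⁻¹) :=
        norm_riemannZeta_le (by linarith) (norm_sub_pos_iff.mp (by linarith))
    _ ≤ 2 * t * (1⁻¹ + (1 / 2)⁻¹) := by
        have hre₁ : 1 / 2 ≤ z.re := by linarith
        have : 0 < z.re := by linarith
        gcongr
    _ = 6 * t := by norm_num; ring

lemma log_norm_riemannZeta_le_add {t : ℝ} {z : ℂ} (ht : 10 ≤ t)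
    (hz : z ∈ ball (2 + t * Complex.I) (3 / 2)) (hζ : riemannZeta z ≠ 0) :
    log ‖riemannZeta z‖ ≤ log ‖riemannZeta (2 + t * Complex.I)‖ + 3 * log t := by
  have hcentre : 3⁻¹ ≤ ‖riemannZeta (2 + t * Complex.I)‖ := by
    have h := inv_norm_riemannZeta_re_le (s := 2 + t * Complex.I) (by simp)
    simp only [Complex.add_re, Complex.re_ofNat, Complex.re_ofReal_mul, Complex.I_re, mul_zero,
      add_zero, Complex.ofReal_ofNat] at h
    exact (inv_anti₀ (norm_pos_iff.mpr (riemannZeta_ne_zero_of_one_le_re (by simp)))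
      norm_riemannZeta_two_le).trans h
  have hcube : 6 * t ≤ 3⁻¹ * t ^ 3 := by
    nlinarith [pow_le_pow_left₀ (by norm_num) ht 2]
  calc log ‖riemannZeta z‖ ≤ log (‖riemannZeta (2 + t * Complex.I)‖ * t ^ 3) := by
        refine log_le_log (norm_pos_iff.mpr hζ) ?_
        exact ((norm_riemannZeta_le_six_mul ht hz).trans hcube).trans (by gcongr)
    _ = log ‖riemannZeta (2 + t * Complex.I)‖ + 3 * log t := by
        rw [log_mul (by positivity) (by positivity), log_pow, Nat.cast_ofNat]

variable {Θ t : ℝ}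

lemma lt_re_of_mem_ball {z : ℂ} (hz : z ∈ ball (2 + t * Complex.I) (2 - Θ)) : Θ < z.re := by
  rw [mem_ball, dist_eq_norm] at hz
  have h := (neg_le_abs _).trans_lt ((Complex.abs_re_le_norm _).trans_lt hz)
  simp only [Complex.sub_re, Complex.add_re, Complex.re_ofNat, Complex.re_ofReal_mul,
    Complex.I_re, mul_zero, add_zero] at h
  linarith

lemma ZetaZeroFreeRight.ne_zero_of_mem_ball (h : ZetaZeroFreeRight Θ) :
    ∀ z ∈ ball (2 + t * Complex.I) (2 - Θ), riemannZeta z ≠ 0 :=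
  fun z hz => h z (lt_re_of_mem_ball hz)

lemma differentiableOn_riemannZeta_ball (h₀ : 1 / 2 ≤ Θ) (ht : 2 ≤ t) :
    DifferentiableOn ℂ riemannZeta (ball (2 + t * Complex.I) (2 - Θ)) := by
  intro z hz
  refine (differentiableAt_riemannZeta ?_).differentiableWithinAt
  rintro rfl
  rw [mem_ball, dist_eq_norm] at hz
  have h := (neg_le_abs _).trans_lt ((Complex.abs_im_le_norm _).trans_lt hz)
  simp only [Complex.sub_im, Complex.one_im, Complex.add_im, Complex.im_ofNat,
    Complex.im_ofReal_mul, Complex.I_im, mul_one, zero_add, zero_sub, neg_neg] at h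
  linarith

lemma ZetaZeroFreeRight.norm_logDeriv_riemannZeta_le (h : ZetaZeroFreeRight Θ) (h₀ : 1 / 2 ≤ Θ)
    (h₁ : Θ < 1) (ht : 10 ≤ t) {z : ℂ} (hz : z ∈ closedBall (2 + t * Complex.I) ((3 - Θ) / 2)) :
    ‖logDeriv riemannZeta z‖ ≤ 144 / (1 - Θ) ^ 2 * log t := by
  have hlog : 0 < log t := log_pos (by linarith)
  have hmain := norm_logDeriv_le_of_log_norm_le (M := 3 * log t) (by positivity)
    (differentiableOn_riemannZeta_ball h₀ (by linarith)) h.ne_zero_of_mem_ball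
    (fun w hw => log_norm_riemannZeta_le_add ht (ball_subset_ball (by linarith) hw)
      (h.ne_zero_of_mem_ball w hw)) (by linarith) hz
  have h₂ : 0 < 1 - Θ := by linarith
  calc ‖logDeriv riemannZeta z‖
      ≤ 8 * (2 - Θ) * (3 * log t) / (2 - Θ - (3 - Θ) / 2) ^ 2 := hmain
    _ ≤ 8 * (3 / 2) * (3 * log t) / (2 - Θ - (3 - Θ) / 2) ^ 2 := by gcongr; linarith
    _ = 144 / (1 - Θ) ^ 2 * log t := by
        rw [show 2 - Θ - (3 - Θ) / 2 = (1 - Θ) / 2 by ring]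
        field_simp
        ring

lemma rpow_mul_log_le {A η L κ : ℝ} (hA : 1 ≤ A) (hL : 0 < L) (hκ : 0 < κ)
    (hη₁ : η ≤ 1) (hηL : η * log L ≤ 1) :
    (A * L) ^ (2 * η / κ) ≤ exp (2 * (log A + 1) / κ) := by
  rw [rpow_def_of_pos (by positivity), log_mul (by positivity) hL.ne', exp_le_exp,
    mul_div_assoc', div_le_div_iff_of_pos_right hκ]
  have := mul_le_of_le_one_left (log_nonneg hA) hη₁
  linarith

lemma norm_logDeriv_riemannZeta_le_div_of_dist_eq {B t η : ℝ} {z : ℂ} (hB₀ : 0 ≤ B)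
    (hB : ∀ w : ℂ, 1 < w.re → w.re ≤ 3 → ‖logDeriv riemannZeta w‖ ≤ (w.re - 1)⁻¹ + B)
    (hη₀ : 0 < η) (hη : η ≤ 1 / 2) (hz : dist z (2 + t * Complex.I) = 1 - η) :
    ‖logDeriv riemannZeta z‖ ≤ (1 + B) / η := by
  have hre := (Complex.abs_re_le_norm (z - (2 + t * Complex.I))).trans_eq
    ((dist_eq_norm _ _).symm.trans hz)
  simp only [Complex.sub_re, Complex.add_re, Complex.re_ofNat, Complex.re_ofReal_mul,
    Complex.I_re, mul_zero, add_zero] at hre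
  obtain ⟨hre₁, hre₂⟩ := abs_le.mp hre
  calc ‖logDeriv riemannZeta z‖ ≤ (z.re - 1)⁻¹ + B := hB z (by linarith) (by linarith)
    _ ≤ η⁻¹ + B / η := by
        gcongr
        · linarith
        · exact le_div_self hB₀ hη₀ (by linarith)
    _ = (1 + B) / η := by rw [add_div, one_div]

lemma ZetaZeroFreeRight.exists_norm_logDeriv_riemannZeta_le_div (h : ZetaZeroFreeRight Θ)
    (h₀ : 1 / 2 ≤ Θ) (h₁ : Θ < 1) :
    ∃ C : ℝ, 0 ≤ C ∧ ∀ t η : ℝ, 10 ≤ t → 0 < η → η ≤ 1 / 2 → η * log (log t) ≤ 1 →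
      ∀ z : ℂ, 1 - η ≤ dist z (2 + t * Complex.I) → dist z (2 + t * Complex.I) ≤ 1 →
        ‖logDeriv riemannZeta z‖ ≤ C / η := by
  obtain ⟨B, hB₀, hB⟩ := exists_norm_logDeriv_riemannZeta_le 3
  set A := 144 / (1 - Θ) ^ 2
  have hA : 1 ≤ A := by
    rw [one_le_div (by nlinarith)]
    nlinarith
  set ρ := (3 - Θ) / 2 with hρ
  have hρ₁ : 1 < ρ := by linarith
  refine ⟨(1 + B) * exp (2 * (log A + 1) / log ρ), by positivity, ?_⟩
  intro t η ht hη₀ hη hηt z hz₁ hz₂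
  have hlogt : 1 ≤ log t := (le_log_iff_exp_le (by linarith)).mpr (by linarith [exp_one_lt_d9])
  have hdiff : DiffContOnCl ℂ (logDeriv riemannZeta)
      (ball (2 + t * Complex.I) ρ \ closedBall (2 + t * Complex.I) (1 - η)) := by
    have hζ := differentiableOn_riemannZeta_ball (t := t) h₀ (by linarith)
    refine DiffContOnCl.mono ?_ sdiff_subset
    exact ((hζ.deriv isOpen_ball).div hζ h.ne_zero_of_mem_ball).diffContOnCl_ball
      (closedBall_subset_ball (by linarith))
  have hinterp := norm_le_mul_rpow_of_mem_annulus hη₀.le hη hρ₁ hdiff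
    ((one_le_div hη₀).mpr (by linarith)) (one_le_mul_of_one_le_of_one_le hA hlogt)
    (fun w hw => norm_logDeriv_riemannZeta_le_div_of_dist_eq hB₀ hB hη₀ hη hw)
    (fun w hw => h.norm_logDeriv_riemannZeta_le h₀ h₁ ht (sphere_subset_closedBall hw)) hz₁ hz₂
  calc ‖logDeriv riemannZeta z‖ ≤ (1 + B) / η * (A * log t) ^ (2 * η / log ρ) := hinterp
    _ ≤ (1 + B) / η * exp (2 * (log A + 1) / log ρ) := by
        gcongr
        exact rpow_mul_log_le hA (by linarith) (log_pos hρ₁) (by linarith) hηt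
    _ = (1 + B) * exp (2 * (log A + 1) / log ρ) / η := by ring

lemma ZetaZeroFreeRight.exists_log_norm_riemannZeta_le_add (h : ZetaZeroFreeRight Θ)
    (h₀ : 1 / 2 ≤ Θ) (h₁ : Θ < 1) :
    ∃ C : ℝ, 0 ≤ C ∧ ∀ t η δ : ℝ, 10 ≤ t → 0 < δ → δ ≤ η → η ≤ 1 / 2 → η * log (log t) ≤ 1 →
      log ‖riemannZeta ((1 + δ : ℝ) + t * Complex.I)‖ ≤
        log ‖riemannZeta ((1 + η : ℝ) + t * Complex.I)‖ + C := by
  obtain ⟨C, hC₀, hC⟩ := h.exists_norm_logDeriv_riemannZeta_le_div h₀ h₁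
  refine ⟨C, hC₀, fun t η δ ht hδ hδη hη hηt => ?_⟩
  have hη₀ : 0 < η := hδ.trans_le hδη
  set s := Set.Icc (1 + δ) (1 + η) ×ℂ {t}
  have hconvex : Convex ℝ s := ((convex_Icc _ _).linear_preimage Complex.reLm).inter
    ((convex_singleton t).linear_preimage Complex.imLm)
  have hdist : ∀ z ∈ s, dist z (2 + t * Complex.I) = 2 - z.re := by
    rintro z ⟨⟨-, hz₂⟩, hz₃⟩
    have hz : z - (2 + t * Complex.I) = ((z.re - 2 : ℝ) : ℂ) :=
      Complex.ext (by simp) (by simp [show z.im = t from hz₃])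
    rw [dist_eq_norm, hz, Complex.norm_real, norm_eq_abs, abs_of_nonpos (by linarith), neg_sub]
  have hsR : s ⊆ ball (2 + t * Complex.I) (2 - Θ) := fun z hz => by
    rw [mem_ball, hdist z hz]
    linarith [hz.1.1]
  have hmem {σ : ℝ} (h₁ : δ ≤ σ) (h₂ : σ ≤ η) : ((1 + σ : ℝ) + t * Complex.I : ℂ) ∈ s := by
    simp [s, Complex.mem_reProdIm, h₁, h₂]
  have hnorm : ‖((1 + δ : ℝ) + t * Complex.I : ℂ) - ((1 + η : ℝ) + t * Complex.I)‖ ≤ η := by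
    rw [add_sub_add_right_eq_sub, ← Complex.ofReal_sub, Complex.norm_real, norm_eq_abs, abs_le]
    constructor <;> linarith
  have hint := log_norm_le_of_norm_logDeriv_le
    (differentiableOn_riemannZeta_ball h₀ (by linarith)) h.ne_zero_of_mem_ball
    hconvex hsR (fun z hz => hC t η ht hη₀ hη hηt z (by linarith [hdist z hz, hz.1.2])
      (by linarith [hdist z hz, hz.1.1]))
    (hmem hδη le_rfl) (hmem le_rfl hδη)
  calc _ ≤ _ + C / η * η := hint.trans (by gcongr)
    _ = _ + C := by rw [div_mul_cancel₀ C hη₀.ne']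

lemma ZetaZeroFreeRight.exists_log_norm_riemannZeta_le (h : ZetaZeroFreeRight Θ)
    (h₀ : 1 / 2 ≤ Θ) (h₁ : Θ < 1) :
    ∃ C : ℝ, ∀ t δ : ℝ, 10 ≤ t → 0 < δ → δ ≤ 2 →
      log ‖riemannZeta ((1 + δ : ℝ) + t * Complex.I)‖ ≤ log (log (log t)) + C := by
  obtain ⟨C, hC₀, hC⟩ := h.exists_log_norm_riemannZeta_le_add h₀ h₁
  refine ⟨log 45 + C, fun t δ ht hδ₀ hδ => ?_⟩
  set L := log (log t)
  have hlogt : 2 ≤ log t := by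
    rw [le_log_iff_exp_le (by linarith), show (2 : ℝ) = 1 + 1 by norm_num, exp_add]
    nlinarith [exp_one_lt_d9, exp_pos 1]
  have hL : 1 / 2 ≤ L := by linarith [log_le_log two_pos hlogt, log_two_gt_d9]
  set η := (2 + L)⁻¹ with hη
  have hη₀ : 0 < η := inv_pos.mpr (by linarith)
  have hη₁ : η ≤ 1 / 2 := by
    rw [one_div]
    exact inv_anti₀ two_pos (by linarith)
  have hηL : η * L ≤ 1 := by
    rw [hη, inv_mul_le_one₀ (by linarith)]
    linarith
  have htrivial : ∀ σ : ℝ, η ≤ σ → σ ≤ 2 →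
      log ‖riemannZeta ((1 + σ : ℝ) + t * Complex.I)‖ ≤ log L + log 45 := fun σ hσ₁ hσ₂ =>
    calc _ ≤ log 9 - log σ := log_norm_riemannZeta_one_add_le_sub_log (hη₀.trans_le hσ₁) hσ₂ t
      _ ≤ log 9 - log η := by gcongr
      _ = log (9 * (2 + L)) := by rw [hη, log_inv, sub_neg_eq_add, log_mul] <;> linarith
      _ ≤ log (L * 45) := log_le_log (by linarith) (by linarith)
      _ = log L + log 45 := log_mul (by linarith) (by norm_num)
  rcases le_total δ η with hδη | hηδ
  · linarith [hC t η δ ht hδ₀ hδη hη₁ hηL, htrivial η le_rfl (by linarith)]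
  · linarith [htrivial δ hηδ hδ]

end ZeroFreeHalfPlane

theorem stmt7_general {Θ : ℝ} (h₀ : 1 / 2 ≤ Θ) (h₁ : Θ < 1) :
    ∃ C : ℝ, ∀ α x : ℝ, 2 ≤ x →
      primeCosSum α x ≤ log (log x) + C ∧
      (0 < α → α ≤ 10 → primeCosSum α x ≤ log (1 / α) + C) ∧
      (ZetaZeroFreeRight Θ → 10 ≤ α → primeCosSum α x ≤ log (log (log α)) + C) := by
  obtain ⟨A, hA⟩ := exists_primeCosSum_le_log_norm_riemannZeta
  obtain ⟨B, hB⟩ : ∃ B : ℝ, ZetaZeroFreeRight Θ → ∀ t δ : ℝ, 10 ≤ t → 0 < δ → δ ≤ 2 →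
      log ‖riemannZeta ((1 + δ : ℝ) + t * Complex.I)‖ ≤ log (log (log t)) + B := by
    by_cases h : ZetaZeroFreeRight Θ
    · exact (h.exists_log_norm_riemannZeta_le h₀ h₁).imp fun _ hB _ => hB
    · exact ⟨0, fun h' => absurd h' h⟩
  refine ⟨A + max (log 169) B, fun α x hx => ?_⟩
  have hδ₀ : 0 < (log x)⁻¹ := inv_pos.mpr (log_pos (by linarith))
  have hδ : (log x)⁻¹ ≤ 2 := inv_log_le_two hx
  have hmax := max_le_iff.mp (le_refl (max (log 169) B))
  refine ⟨?_, fun hα₀ hα => ?_, fun h hα => ?_⟩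
  · have h₉ : log 9 ≤ log 169 := log_le_log (by norm_num) (by norm_num)
    linarith [hA α x hx, log_norm_riemannZeta_one_add_le_sub_log hδ₀ hδ α, log_inv (log x)]
  · rw [one_div, log_inv]
    linarith [hA α x hx, log_norm_riemannZeta_one_add_le_sub_log_im hδ₀ hδ hα₀ hα]
  · linarith [hA α x hx, hB h α _ hα hδ₀ hδ]

theorem stmt7 :
    ∃ C : ℝ, ∀ (α x : ℝ), 0 < α → 2 ≤ x →
      ((α ≤ 1 / Real.log x ∨ Real.exp x ≤ α) →
        ∑ p ∈ Finset.filter Nat.Prime (Finset.Iic ⌊x⌋₊),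
            Real.cos (α * Real.log p) / p
          ≤ Real.log (Real.log x) + C) ∧
      (1 / Real.log x ≤ α → α ≤ 10 →
        ∑ p ∈ Finset.filter Nat.Prime (Finset.Iic ⌊x⌋₊),
            Real.cos (α * Real.log p) / p
          ≤ Real.log (1 / α) + C) ∧
      (RiemannHypothesis → 10 ≤ α → α ≤ Real.exp x →
        ∑ p ∈ Finset.filter Nat.Prime (Finset.Iic ⌊x⌋₊),
            Real.cos (α * Real.log p) / p
          ≤ Real.log (Real.log (Real.log α)) + C) := by
  obtain ⟨C, hC⟩ := stmt7_general (Θ := 1 / 2) le_rfl (by norm_num)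
  exact ⟨C, fun α x hα hx => ⟨fun _ => (hC α x hx).1, fun _ => (hC α x hx).2.1 hα,
    fun hRH h _ => (hC α x hx).2.2 (zetaZeroFreeRight_half_of_riemannHypothesis hRH) h⟩⟩
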